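/- Let n be even and j be odd (so n − j is odd, and graphs containing a small loop are set equal to zero in the graph complex). Let H₁ be the decorated graph with internal vertices 1,2,3,4, θ-edges {1,2} (labeled 1) and {3,4} (labeled 2), and one η-edge oriented from 2 to 3; let H₂ be the decorated graph with internal vertices 1,2,3 and one external vertex 4, with θ-edges {1,4}, {2,4}, {3,4} labeled 1, 2, 3. Then H := (1/2)·H₁ + (1/6)·H₂ ∈ D^{2,0} is a cocycle: δH = 0 in D^{2,1}. -/

import Mathlib

/-!
Decorated graphs and the graph complex of the paper in the conventions for `n` even and
`j` odd (so `n − j` is odd): internal vertices are labeled `0, …, s-1` and external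
vertices `s, …, s+t-1`; the θ-edges are labeled (by their position in a list) and
unoriented, the η-edges are oriented; double loops are labeled and signed.  Since
`n − j` is odd, every graph with a small loop is `0` in the graph complex.
-/

/-- Raw data of a decorated graph for `n` even, `j` odd.  `thetas` is the list of
labeled θ-edges (the label of an edge being its position in the list), each stored with
an arbitrary ordering of its two endpoints; `etas` is the multiset of oriented η-edges;
`sloops` is the multiset of small loops (recorded by their vertex); `dloops` is the
list of labeled double loops `(v, ε)` at the vertex `v` with sign `ε`. -/
structure DecGraphE where
  s : ℕ
  t : ℕ
  thetas : List (ℕ × ℕ)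
  etas : Multiset (ℕ × ℕ)
  sloops : Multiset ℕ
  dloops : List (ℕ × Bool)
deriving DecidableEq

namespace DecGraphE

/-- The number of θ-edges (each loop, small or double, contributes one θ-edge). -/
def nTheta (Γ : DecGraphE) : ℕ :=
  Γ.thetas.length + Multiset.card Γ.sloops + Γ.dloops.length

/-- `ord Γ := #{θ-edges} − #{external vertices}`. -/
def ordG (Γ : DecGraphE) : ℤ := (Γ.nTheta : ℤ) - (Γ.t : ℤ)

/-- `deg Γ := 2·#{θ-edges} − 3·#{external vertices} − #{internal vertices}`. -/
def degG (Γ : DecGraphE) : ℤ := 2 * (Γ.nTheta : ℤ) - 3 * (Γ.t : ℤ) - (Γ.s : ℤ)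

/-- The relabeling map coming from the identification of the endpoints `p, q` of a
contracted edge: the merged vertex is labeled `min p q` and all labels bigger than
`max p q` are decreased by one. -/
def cmap (p q v : ℕ) : ℕ :=
  if v = max p q then min p q else if max p q < v then v - 1 else v

/-- Relabel both entries of a pair under the contraction of an edge joining `p, q`. -/
def mapPair (p q : ℕ) (x : ℕ × ℕ) : ℕ × ℕ := (cmap p q x.1, cmap p q x.2)

/-- The η-edge joining `p` and `q` has a parallel θ-edge (multiple (η,θ)-pair). -/
def hasThetaPartner (Γ : DecGraphE) (p q : ℕ) : Prop :=
  (p, q) ∈ Γ.thetas ∨ (q, p) ∈ Γ.thetas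

instance (Γ : DecGraphE) (p q : ℕ) : Decidable (Γ.hasThetaPartner p q) := by
  unfold hasThetaPartner; infer_instance

/-- Contraction of the oriented η-edge `x = (p, q)`: the endpoints are identified (the
merged vertex labeled `min p q`, labels above `max p q` decreased by one) and the edge
is deleted; if `x` has a parallel θ-edge, the pair becomes a double loop, labeled last,
with sign `+1` iff `p < q`. -/
def contractEta (Γ : DecGraphE) (x : ℕ × ℕ) : DecGraphE :=
  let p := x.1
  let q := x.2
  { s := Γ.s - 1
    t := Γ.t
    thetas := (if Γ.hasThetaPartner p q then
        Γ.thetas.eraseIdx (Γ.thetas.findIdx fun e => e == (p, q) || e == (q, p))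
      else Γ.thetas).map (mapPair p q)
    etas := (Γ.etas.erase x).map (mapPair p q)
    sloops := Γ.sloops.map (cmap p q)
    dloops := (Γ.dloops.map fun l => (cmap p q l.1, l.2)) ++
      (if Γ.hasThetaPartner p q then [(min p q, decide (p < q))] else []) }

/-- Contraction of the `i`-th θ-edge, with endpoints `p, q` (endpoints identified and
labels shifted as above, and labels of later θ-edges decreased by one): the edge is
deleted if it has an external endpoint, and it becomes a small loop if both of its
endpoints are internal. -/
def contractTheta (Γ : DecGraphE) (i : ℕ) : DecGraphE :=
  let x := Γ.thetas.getD i (0, 0)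
  let p := x.1
  let q := x.2
  { s := if Γ.s ≤ p ∨ Γ.s ≤ q then Γ.s else Γ.s - 1
    t := if Γ.s ≤ p ∨ Γ.s ≤ q then Γ.t - 1 else Γ.t
    thetas := (Γ.thetas.eraseIdx i).map (mapPair p q)
    etas := Γ.etas.map (mapPair p q)
    sloops := Γ.sloops.map (cmap p q) +
      (if Γ.s ≤ p ∨ Γ.s ≤ q then 0 else {min p q})
    dloops := Γ.dloops.map fun l => (cmap p q l.1, l.2) }

/-- The sign `τ(e)` of an oriented η-edge `e = p → q` (with our `0`-indexed vertex
labels; in the `1`-indexed labels of the paper this is `q` if `p < q`, `p + 1` else). -/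
def tauEta (x : ℕ × ℕ) : ℕ := if x.1 < x.2 then x.2 + 1 else x.1 + 2

/-- The sign `τ(e) = i + s + 1` of the `i`-th θ-edge (paper's `1`-based conventions;
here `i` is the `0`-based position in the list, whence `i + s + 2`). -/
def tauTheta (Γ : DecGraphE) (i : ℕ) : ℕ := i + Γ.s + 2

/-- The coboundary `δΓ := Σ_e (−1)^{τ(e)} Γ/e` of a single decorated graph: the sum
runs over all non-loop edges of `Γ`, except the θ-edge of a multiple (η,θ)-pair, whose
contraction is not defined. -/
noncomputable def deltaSingle (Γ : DecGraphE) : DecGraphE →₀ ℝ :=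
  (Γ.etas.map fun x =>
      if x.1 ≠ x.2 then
        ((-1 : ℝ) ^ tauEta x) • Finsupp.single (Γ.contractEta x) (1 : ℝ)
      else 0).sum
  + ∑ i : Fin Γ.thetas.length,
      (if (Γ.thetas.get i).1 ≠ (Γ.thetas.get i).2 ∧
          ¬((((Γ.thetas.get i).1, (Γ.thetas.get i).2) ∈ Γ.etas) ∨
            (((Γ.thetas.get i).2, (Γ.thetas.get i).1) ∈ Γ.etas)) then
        ((-1 : ℝ) ^ Γ.tauTheta (i : ℕ)) • Finsupp.single (Γ.contractTheta (i : ℕ)) (1 : ℝ)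
      else 0)

/-- The coboundary, extended linearly to the free vector space on decorated graphs. -/
noncomputable def deltaTilde : (DecGraphE →₀ ℝ) →ₗ[ℝ] (DecGraphE →₀ ℝ) :=
  Finsupp.linearCombination ℝ deltaSingle

/-- Relabel the vertices: `σ` permutes the internal labels, `τ` the external labels. -/
def vperm (s t : ℕ) (σ : Equiv.Perm (Fin s)) (τ : Equiv.Perm (Fin t)) (v : ℕ) : ℕ :=
  if h : v < s then (σ ⟨v, h⟩ : Fin s).val
  else if h' : v - s < t then s + (τ ⟨v - s, h'⟩ : Fin t).val
  else v

/-- The graph obtained by permuting the labels of the internal vertices by `σ` and of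
the external vertices by `τ`. -/
def relabel (Γ : DecGraphE) (σ : Equiv.Perm (Fin Γ.s)) (τ : Equiv.Perm (Fin Γ.t)) :
    DecGraphE where
  s := Γ.s
  t := Γ.t
  thetas := Γ.thetas.map fun x => (vperm Γ.s Γ.t σ τ x.1, vperm Γ.s Γ.t σ τ x.2)
  etas := Γ.etas.map fun x => (vperm Γ.s Γ.t σ τ x.1, vperm Γ.s Γ.t σ τ x.2)
  sloops := Γ.sloops.map (vperm Γ.s Γ.t σ τ)
  dloops := Γ.dloops.map fun l => (vperm Γ.s Γ.t σ τ l.1, l.2)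

/-- The graph obtained by reversing the oriented η-edge `x`. -/
def reverseEta (Γ : DecGraphE) (x : ℕ × ℕ) : DecGraphE :=
  { Γ with etas := (x.2, x.1) ::ₘ Γ.etas.erase x }

/-- The graph obtained by swapping the (immaterial) stored ordering of the endpoints of
the `i`-th θ-edge. -/
def swapTheta (Γ : DecGraphE) (i : ℕ) : DecGraphE :=
  let x := Γ.thetas.getD i (0, 0)
  { Γ with thetas := Γ.thetas.set i (x.2, x.1) }

/-- The graph obtained by permuting the labels of the θ-edges by `ρ`. -/
def permThetas (Γ : DecGraphE) (ρ : Equiv.Perm (Fin Γ.thetas.length)) : DecGraphE :=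
  { Γ with thetas := List.ofFn fun i => Γ.thetas.get (ρ i) }

/-- The graph obtained by switching the sign of the `i`-th double loop. -/
def switchDloop (Γ : DecGraphE) (i : ℕ) : DecGraphE :=
  let l := Γ.dloops.getD i (0, true)
  { Γ with dloops := Γ.dloops.set i (l.1, !l.2) }

/-- The graph obtained by permuting the labels of the double loops by `ρ`. -/
def permDloops (Γ : DecGraphE) (ρ : Equiv.Perm (Fin Γ.dloops.length)) : DecGraphE :=
  { Γ with dloops := List.ofFn fun i => Γ.dloops.get (ρ i) }

/-- `Γ` has multiple edges of the same type: two vertices joined by two or more η-edges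
or by two or more θ-edges. -/
def IsMulti (Γ : DecGraphE) : Prop :=
  ∃ p q : ℕ, p ≠ q ∧
    (2 ≤ Γ.thetas.count (p, q) + Γ.thetas.count (q, p) ∨
      2 ≤ Γ.etas.count (p, q) + Γ.etas.count (q, p))

end DecGraphE

/-- The relations defining the space of graphs `𝒟^*` for `n` even and `j` odd:
`Γ' − (−1)^{j·sign σ + n·sign τ + a + b + sign ρ + sign ρ'} Γ` (with `j` odd, `n` even)
whenever `Γ'` is obtained from `Γ` by permuting the vertex labels by `σ` (internal) and
`τ` (external), reversing `a` oriented η-edges, switching `b` double-loop signs, and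
permuting the labels of the θ-edges by `ρ` and of the double loops by `ρ'` (permuting
the labels of the θ-edges yields a sign because the corresponding forms have odd
degree, while the stored ordering of the endpoints of a θ-edge is immaterial);
`Γ'' = 0` for every graph `Γ''` with multiple edges of the same type; and `Γ = 0` for
every graph `Γ` with a small loop (since `n − j` is odd). -/
def GraphRelsE : Set (DecGraphE →₀ ℝ) :=
  {r | ∃ (Γ : DecGraphE) (σ : Equiv.Perm (Fin Γ.s)) (τ : Equiv.Perm (Fin Γ.t)),
      r = Finsupp.single (Γ.relabel σ τ) 1 -
        (((Equiv.Perm.sign σ : ℤˣ) : ℤ) : ℝ) • Finsupp.single Γ 1} ∪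
  {r | ∃ (Γ : DecGraphE) (x : ℕ × ℕ), x ∈ Γ.etas ∧
      r = Finsupp.single (Γ.reverseEta x) 1 + Finsupp.single Γ 1} ∪
  {r | ∃ (Γ : DecGraphE) (i : ℕ), i < Γ.thetas.length ∧
      r = Finsupp.single (Γ.swapTheta i) 1 - Finsupp.single Γ 1} ∪
  {r | ∃ (Γ : DecGraphE) (ρ : Equiv.Perm (Fin Γ.thetas.length)),
      r = Finsupp.single (Γ.permThetas ρ) 1 -
        (((Equiv.Perm.sign ρ : ℤˣ) : ℤ) : ℝ) • Finsupp.single Γ 1} ∪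
  {r | ∃ (Γ : DecGraphE) (i : ℕ), i < Γ.dloops.length ∧
      r = Finsupp.single (Γ.switchDloop i) 1 + Finsupp.single Γ 1} ∪
  {r | ∃ (Γ : DecGraphE) (ρ : Equiv.Perm (Fin Γ.dloops.length)),
      r = Finsupp.single (Γ.permDloops ρ) 1 -
        (((Equiv.Perm.sign ρ : ℤˣ) : ℤ) : ℝ) • Finsupp.single Γ 1} ∪
  {r | ∃ Γ : DecGraphE, Γ.IsMulti ∧ r = Finsupp.single Γ 1} ∪
  {r | ∃ Γ : DecGraphE, Γ.sloops ≠ 0 ∧ r = Finsupp.single Γ 1}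

/-- The projection from the free vector space on decorated graphs to the graph complex
(its quotient by the subspace spanned by the relations). -/
noncomputable def graphProjE :
    (DecGraphE →₀ ℝ) →ₗ[ℝ] ((DecGraphE →₀ ℝ) ⧸ Submodule.span ℝ GraphRelsE) :=
  (Submodule.span ℝ GraphRelsE).mkQ

/-- The graph `H₁` of the cocycle `H`: four internal vertices `0,1,2,3`, θ-edges
`{0,1}` (labeled `1`) and `{2,3}` (labeled `2`), and one η-edge oriented `1 → 2`
(in the paper's `1`-indexed labels: θ-edges `{1,2}`, `{3,4}` and η-edge `2 → 3`). -/
def H1 : DecGraphE := ⟨4, 0, [(0, 1), (2, 3)], {(1, 2)}, 0, []⟩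

/-- The graph `H₂` of the cocycle `H`: three internal vertices `0,1,2`, one external
vertex `3`, and θ-edges `{0,3}, {1,3}, {2,3}` labeled `1, 2, 3` (in the paper's
`1`-indexed labels: internal vertices `1,2,3`, external vertex `4`). -/
def H2 : DecGraphE := ⟨3, 1, [(0, 3), (1, 3), (2, 3)], 0, 0, []⟩

/-- The three-vertex graph with no η-edges, no loops and two given θ-edges. -/
def path3 (a b : ℕ × ℕ) : DecGraphE := ⟨3, 0, [a, b], 0, 0, []⟩

theorem proj_rel {r : DecGraphE →₀ ℝ} (h : r ∈ GraphRelsE) : graphProjE r = 0 :=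
  (Submodule.Quotient.mk_eq_zero _).2 (Submodule.subset_span h)

theorem proj_sloop (Γ : DecGraphE) (h : Γ.sloops ≠ 0) :
    graphProjE (Finsupp.single Γ 1) = 0 :=
  proj_rel (Or.inr ⟨Γ, h, rfl⟩)

theorem proj_swap (Γ : DecGraphE) (i : ℕ) (h : i < Γ.thetas.length) :
    graphProjE (Finsupp.single (Γ.swapTheta i) 1) = graphProjE (Finsupp.single Γ 1) := by
  have := proj_rel (r := Finsupp.single (Γ.swapTheta i) 1 - Finsupp.single Γ 1)
    (Or.inl (Or.inl (Or.inl (Or.inl (Or.inl (Or.inr ⟨Γ, i, h, rfl⟩))))))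
  rwa [map_sub, sub_eq_zero] at this

theorem proj_relabel (Γ : DecGraphE) (σ : Equiv.Perm (Fin Γ.s)) (h : Equiv.Perm.sign σ = -1) :
    graphProjE (Finsupp.single (Γ.relabel σ 1) 1) = -graphProjE (Finsupp.single Γ 1) := by
  have := proj_rel (r := Finsupp.single (Γ.relabel σ 1) 1 -
        (((Equiv.Perm.sign σ : ℤˣ) : ℤ) : ℝ) • Finsupp.single Γ 1)
    (Or.inl (Or.inl (Or.inl (Or.inl (Or.inl (Or.inl (Or.inl ⟨Γ, σ, 1, rfl⟩)))))))
  rw [h, map_sub, sub_eq_zero] at this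
  simpa using this

theorem swap_eq : (path3 (0, 1) (1, 2)).swapTheta 1 = path3 (0, 1) (2, 1) := by decide

theorem relabel_eq0 :
    (path3 (0, 1) (2, 1)).relabel (Equiv.swap (0 : Fin 3) (1 : Fin 3)) 1 = path3 (1, 0) (2, 0) := by
  decide

theorem relabel_eq2 :
    (path3 (0, 1) (2, 1)).relabel (Equiv.swap (1 : Fin 3) (2 : Fin 3)) 1 = path3 (0, 2) (1, 2) := by
  decide

theorem proj_B1 : graphProjE (Finsupp.single (path3 (0, 1) (2, 1)) 1) =
    graphProjE (Finsupp.single (path3 (0, 1) (1, 2)) 1) := by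
  rw [← swap_eq]; exact proj_swap _ _ (by decide)

theorem proj_B0 : graphProjE (Finsupp.single (path3 (1, 0) (2, 0)) 1) =
    -graphProjE (Finsupp.single (path3 (0, 1) (1, 2)) 1) := by
  rw [← proj_B1, ← relabel_eq0]
  exact proj_relabel _ _ (Equiv.Perm.sign_swap (show (0 : Fin 3) ≠ (1 : Fin 3) by decide))

theorem proj_B2 : graphProjE (Finsupp.single (path3 (0, 2) (1, 2)) 1) =
    -graphProjE (Finsupp.single (path3 (0, 1) (1, 2)) 1) := by
  rw [← proj_B1, ← relabel_eq2]
  exact proj_relabel _ _ (Equiv.Perm.sign_swap (show (1 : Fin 3) ≠ (2 : Fin 3) by decide))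

theorem delta_H1 : graphProjE (DecGraphE.deltaSingle H1) =
    -graphProjE (Finsupp.single (path3 (0, 1) (1, 2)) 1) := by
  have e : H1.contractEta (1, 2) = path3 (0, 1) (1, 2) := by decide
  have s0 := proj_sloop (H1.contractTheta 0) (by decide)
  have s1 := proj_sloop (H1.contractTheta 1) (by decide)
  have h : DecGraphE.deltaSingle H1 =
      ((-1 : ℝ) ^ 3) • Finsupp.single (H1.contractEta (1, 2)) (1 : ℝ) +
      (((-1 : ℝ) ^ 6) • Finsupp.single (H1.contractTheta 0) (1 : ℝ) +
      ((-1 : ℝ) ^ 7) • Finsupp.single (H1.contractTheta 1) (1 : ℝ)) := by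
    unfold DecGraphE.deltaSingle
    congr 1
    · refine (Multiset.sum_singleton _).trans ?_
      simp [DecGraphE.tauEta]
    · refine (Fin.sum_univ_two (M := DecGraphE →₀ ℝ) _).trans ?_
      congr 1
  rw [h, e]
  simp only [map_add, map_smul, s0, s1]
  norm_num

theorem delta_H2 : graphProjE (DecGraphE.deltaSingle H2) =
    (3 : ℝ) • graphProjE (Finsupp.single (path3 (0, 1) (1, 2)) 1) := by
  have e0 : H2.contractTheta 0 = path3 (1, 0) (2, 0) := by decide
  have e1 : H2.contractTheta 1 = path3 (0, 1) (2, 1) := by decide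
  have e2 : H2.contractTheta 2 = path3 (0, 2) (1, 2) := by decide
  have h : DecGraphE.deltaSingle H2 =
      0 + (((-1 : ℝ) ^ 5) • Finsupp.single (H2.contractTheta 0) (1 : ℝ) +
      ((-1 : ℝ) ^ 6) • Finsupp.single (H2.contractTheta 1) (1 : ℝ) +
      ((-1 : ℝ) ^ 7) • Finsupp.single (H2.contractTheta 2) (1 : ℝ)) := by
    unfold DecGraphE.deltaSingle
    congr 1
    refine (Fin.sum_univ_three (M := DecGraphE →₀ ℝ) _).trans ?_
    congr 1
  rw [h, e0, e1, e2]
  simp only [map_add, map_smul, map_zero, proj_B0, proj_B1, proj_B2]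
  module

/-- (For `n` even and `j` odd.)  The element `H := (1/2)·H₁ + (1/6)·H₂` lies in
`𝒟^{2,0}` (both graphs have `ord = 2` and `deg = 0`) and is a cocycle:
`δH = 0` in `𝒟^{2,1}`. -/
theorem H_is_a_graph_cocycle :
    (H1.ordG = 2 ∧ H1.degG = 0 ∧ H2.ordG = 2 ∧ H2.degG = 0) ∧
    graphProjE (DecGraphE.deltaTilde
      ((1 / 2 : ℝ) • Finsupp.single H1 1 + (1 / 6 : ℝ) • Finsupp.single H2 1)) = 0 := by
  refine ⟨by decide, ?_⟩
  have d : ∀ Γ, DecGraphE.deltaTilde (Finsupp.single Γ 1) = DecGraphE.deltaSingle Γ := by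
    intro Γ
    simp [DecGraphE.deltaTilde]
  simp only [map_add, map_smul, d, delta_H1, delta_H2]
  module
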